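/- arXiv:1206.4497 — 5 statements merged into one kernel-verified Lean document; each statement's English description precedes it below -/
import Mathlib

section
/- Let M, D, A be n×n real matrices with D symmetric, A antisymmetric, and −D + A invertible. If the matrix S := (−D + A)⁻¹ · M is symmetric, then A·Mᵀ + M·A = D·Mᵀ − M·D. -/
open Matrix

/-!
Put `B = -D + A` and `S = B⁻¹ * M`. Since `M * Bᵀ = B * S * Bᵀ` is a congruence transform of `S`,
`S` is symmetric if and only if `M * Bᵀ` is, that is, if and only if `B * Mᵀ = M * Bᵀ`. As
`Bᵀ = -D - A`, expanding both sides gives the equation. Transposition enters only as an involution,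
so it can be replaced by the `star` of any star ring.
-/

theorem isSelfAdjoint_ringInverse_mul_iff {R : Type*} [MonoidWithZero R] [StarMul R] {b m : R}
    (hb : IsUnit b) : IsSelfAdjoint (Ring.inverse b * m) ↔ IsSelfAdjoint (m * star b) := by
  rw [← hb.isSelfAdjoint_conjugate_iff, Ring.mul_inverse_cancel_left b m hb]

theorem isSelfAdjoint_mul_star_neg_add_iff {R : Type*} [NonUnitalRing R] [StarRing R] {d a : R}
    (hd : IsSelfAdjoint d) (ha : star a = -a) (m : R) :
    IsSelfAdjoint (m * star (-d + a)) ↔ a * star m + m * a = d * star m - m * d := by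
  have star_b : star (-d + a) = -d - a := by
    rw [star_add, star_neg, hd.star_eq, ha, sub_eq_add_neg]
  have expand : (-d + a) * star m - m * (-d - a) =
      (a * star m + m * a) - (d * star m - m * d) := by
    noncomm_ring
  calc IsSelfAdjoint (m * star (-d + a))
      ↔ (-d + a) * star m = m * (-d - a) := by
        rw [isSelfAdjoint_iff, star_mul, star_star, star_b]
    _ ↔ a * star m + m * a = d * star m - m * d := by
        rw [← sub_eq_zero, expand, sub_eq_zero]

theorem stmt0_general {R : Type*} [Ring R] [StarRing R] (M D A : R)
    (hD : IsSelfAdjoint D) (hA : star A = -A) (hInv : IsUnit (-D + A)) :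
    IsSelfAdjoint (Ring.inverse (-D + A) * M) ↔ A * star M + M * A = D * star M - M * D :=
  (isSelfAdjoint_ringInverse_mul_iff hInv).trans (isSelfAdjoint_mul_star_neg_add_iff hD hA M)

/-- Equation (4.1): if `D` is symmetric, `A` is antisymmetric, `-D + A` is invertible,
and `S := (-D + A)⁻¹ * M` is symmetric, then `A * Mᵀ + M * A = D * Mᵀ - M * D`. -/
theorem stmt0 {n : ℕ} (M D A : Matrix (Fin n) (Fin n) ℝ)
    (hD : Dᵀ = D) (hA : Aᵀ = -A) (hInv : IsUnit (-D + A))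
    (hS : ((-D + A)⁻¹ * M)ᵀ = (-D + A)⁻¹ * M) :
    A * Mᵀ + M * A = D * Mᵀ - M * D := by
  simp only [← conjTranspose_eq_transpose_of_trivial, ← star_eq_conjTranspose,
    nonsing_inv_eq_ringInverse] at hD hA hS ⊢
  exact (stmt0_general M D A hD hA hInv).mp hS
end

section
/- Let M, D, A be n×n real matrices with D symmetric, A antisymmetric, and −D + A invertible, and suppose S := (−D + A)⁻¹ · M is symmetric and invertible. Then M·S⁻¹ + S⁻¹·Mᵀ = −2·D. -/
open Matrix

section Transpose

variable {m n R : Type*}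

theorem add_add_transpose_of_isSymm_of_transpose_eq_neg [Ring R] {B A : Matrix n n R}
    (hB : B.IsSymm) (hA : Aᵀ = -A) : (B + A) + (B + A)ᵀ = (2 : R) • B := by
  rw [transpose_add, hB.eq, hA, two_smul]
  abel

variable [Fintype n] [DecidableEq n] [CommRing R]

theorem transpose_mul_inv_of_isSymm {S : Matrix n n R} (hS : S.IsSymm) (M : Matrix m n R) :
    (M * S⁻¹)ᵀ = S⁻¹ * Mᵀ := by
  rw [transpose_mul, hS.inv.eq]

theorem mul_inv_eq_of_eq_inv_mul {M T S : Matrix n n R} (hT : IsUnit T) (hS : IsUnit S)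
    (h : S = T⁻¹ * M) : M * S⁻¹ = T := by
  have := hT.invertible
  have := hS.invertible
  have hM : M = T * S := (inv_mul_eq_iff_eq_mul_of_invertible T M S).mp h.symm
  exact (mul_inv_eq_iff_eq_mul_of_invertible S M T).mpr hM

theorem stmt3_general {M D A S : Matrix n n R} (hD : D.IsSymm) (hA : Aᵀ = -A)
    (hInv : IsUnit (-D + A)) (hSdef : S = (-D + A)⁻¹ * M) (hS : S.IsSymm) (hSinv : IsUnit S) :
    M * S⁻¹ + S⁻¹ * Mᵀ = -(2 : R) • D :=
  calc
    M * S⁻¹ + S⁻¹ * Mᵀ = M * S⁻¹ + (M * S⁻¹)ᵀ := by rw [transpose_mul_inv_of_isSymm hS]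
    _ = (-D + A) + (-D + A)ᵀ := by rw [mul_inv_eq_of_eq_inv_mul hInv hSinv hSdef]
    _ = (2 : R) • -D := add_add_transpose_of_isSymm_of_transpose_eq_neg hD.neg hA
    _ = -(2 : R) • D := by rw [smul_neg, neg_smul]

end Transpose

/-- Equation (4.2): if `D` is symmetric, `A` is antisymmetric, `-D + A` is invertible,
and `S := (-D + A)⁻¹ * M` is symmetric and invertible, then
`M * S⁻¹ + S⁻¹ * Mᵀ = -2 • D`. -/
theorem stmt3 {n : ℕ} (M D A : Matrix (Fin n) (Fin n) ℝ)
    (hD : Dᵀ = D) (hA : Aᵀ = -A) (hInv : IsUnit (-D + A))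
    (S : Matrix (Fin n) (Fin n) ℝ) (hSdef : S = (-D + A)⁻¹ * M)
    (hS : Sᵀ = S) (hSinv : IsUnit S) :
    M * S⁻¹ + S⁻¹ * Mᵀ = -(2 : ℝ) • D :=
  stmt3_general hD hA hInv hSdef hS hSinv
end

section
/- Let D, A, S be n×n real matrices with D symmetric, A antisymmetric, and S symmetric and invertible, set M := (−D + A)·S and M̃ := (−D − A)·S, and let f be a vector in ℝⁿ and λ a nonzero real number with Mᵀ·f = λ·f. Then M̃·(S⁻¹·f) = λ·(S⁻¹·f), and moreover S⁻¹·f = −λ⁻¹·(D + A)·f. -/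
open Matrix

/-! Since `(-D + A)ᵀ = -D - A`, the transpose of `M = (-D + A) * S` is `S * (-D - A)`, whereas
`M̃ = (-D - A) * S`. The two products differ only in the order of their factors, so `S⁻¹`
intertwines them and carries eigenvectors of `Mᵀ` to eigenvectors of `M̃`. Its value on such an
eigenvector is found by cancelling `S` in `S * (-D - A) *ᵥ f = l • f`. -/

section

variable {m R : Type*} [Fintype m] [CommRing R]

theorem transpose_neg_add_mul_of_symm {D A S : Matrix m m R}
    (hD : Dᵀ = D) (hA : Aᵀ = -A) (hS : Sᵀ = S) :
    ((-D + A) * S)ᵀ = S * (-D - A) := by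
  rw [transpose_mul, transpose_add, transpose_neg, hD, hA, hS, sub_eq_add_neg]

variable [DecidableEq m] {α : Type*} [DistribSMul α R] [SMulCommClass α R R]
  {S B : Matrix m m R} {f : m → R} {l : α}

theorem mulVec_eq_smul_inv_mulVec (hS : IsUnit S) (hf : (S * B) *ᵥ f = l • f) :
    B *ᵥ f = l • (S⁻¹ *ᵥ f) := by
  have hdet : IsUnit S.det := (isUnit_iff_isUnit_det S).mp hS
  calc
    B *ᵥ f = S⁻¹ *ᵥ ((S * B) *ᵥ f) := by
      rw [mulVec_mulVec, nonsing_inv_mul_cancel_left _ _ hdet]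
    _ = l • (S⁻¹ *ᵥ f) := by rw [hf, mulVec_smul]

theorem mul_mulVec_inv_mulVec_eq_smul (hS : IsUnit S) (hf : (S * B) *ᵥ f = l • f) :
    (B * S) *ᵥ (S⁻¹ *ᵥ f) = l • (S⁻¹ *ᵥ f) := by
  have hdet : IsUnit S.det := (isUnit_iff_isUnit_det S).mp hS
  rw [mulVec_mulVec, mul_nonsing_inv_cancel_right _ _ hdet, mulVec_eq_smul_inv_mulVec hS hf]

end

theorem stmt12_general {m R : Type*} [Fintype m] [DecidableEq m] [CommRing R]
    (D A S : Matrix m m R)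
    (hD : Dᵀ = D) (hA : Aᵀ = -A) (hS : Sᵀ = S) (hSinv : IsUnit S)
    (f : m → R) (l : Rˣ)
    (hf : ((-D + A) * S)ᵀ *ᵥ f = l • f) :
    ((-D - A) * S) *ᵥ (S⁻¹ *ᵥ f) = l • (S⁻¹ *ᵥ f) ∧
      S⁻¹ *ᵥ f = -l⁻¹ • ((D + A) *ᵥ f) := by
  rw [transpose_neg_add_mul_of_symm hD hA hS] at hf
  refine ⟨mul_mulVec_inv_mulVec_eq_smul hSinv hf, ?_⟩
  calc
    S⁻¹ *ᵥ f = l⁻¹ • ((-D - A) *ᵥ f) :=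
      eq_inv_smul_iff.mpr (mulVec_eq_smul_inv_mulVec hSinv hf).symm
    _ = -l⁻¹ • ((D + A) *ᵥ f) := by
      rw [← neg_add', neg_mulVec, smul_neg, Units.neg_smul]

/-- If `f` is an eigenvector of `Mᵀ` with nonzero eigenvalue `l`, where
`M = (-D + A) * S`, then `S⁻¹ *ᵥ f` is an eigenvector of `M̃ = (-D - A) * S`
with the same eigenvalue, and `S⁻¹ *ᵥ f = -l⁻¹ • ((D + A) *ᵥ f)`. -/
theorem stmt12 {n : ℕ} (D A S : Matrix (Fin n) (Fin n) ℝ)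
    (hD : Dᵀ = D) (hA : Aᵀ = -A) (hS : Sᵀ = S) (hSinv : IsUnit S)
    (f : Fin n → ℝ) (l : ℝ) (hl : l ≠ 0)
    (hf : ((-D + A) * S)ᵀ.mulVec f = l • f) :
    ((-D - A) * S).mulVec (S⁻¹.mulVec f) = l • (S⁻¹.mulVec f) ∧
      S⁻¹.mulVec f = -l⁻¹ • ((D + A).mulVec f) :=
  stmt12_general D A S hD hA hS hSinv f (Units.mk0 l hl) hf
end

section
/- Let γ, c, β be real numbers with γ ≠ 0, β ≠ 0, and β² − β + c/γ² = 0. Then the function φ(x, v) := (c·x/γ + β·v)²/(2β) satisfies, for all x, v ∈ ℝ, v·(∂φ/∂x)(x,v) − (γ·v + c·x)·(∂φ/∂v)(x,v) + γ·((∂φ/∂v)(x,v))² = 0. -/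
/-!
Put `w = c * x / γ + β * v`, so that `φ = w ^ 2 / (2 * β)`, `φ_x = w * (c / γ) / β` and `φ_v = w`.
Every term of the Freidlin equation is then divisible by `w`, and in the cofactor the terms in `x`
cancel. What remains is a multiple of `v` whose coefficient vanishes exactly when `β` is a root of
`β ^ 2 - β + c / γ ^ 2`.
-/

section

variable {𝕜 : Type*} [NontriviallyNormedField 𝕜]

/-- The left-hand side of the Freidlin (eikonal) equation of the Kramers model with friction `γ`,
applied to `φ` at position `x` and velocity `v`. The potential enters only through its derivative,
so the argument `U'` is that derivative. -/
noncomputable def freidlinOperator (γ : 𝕜) (U' : 𝕜 → 𝕜) (φ : 𝕜 → 𝕜 → 𝕜) (x v : 𝕜) : 𝕜 :=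
  v * deriv (fun x' => φ x' v) x - (γ * v + U' x) * deriv (fun v' => φ x v') v +
    γ * deriv (fun v' => φ x v') v ^ 2

/-- The candidate solution `φ` of the Freidlin equation for the potential `c * x ^ 2 / 2`: the
square of a single linear form in position and velocity, hence degenerate as a quadratic form.
The parameter `β` is arbitrary here; the paper's `φ±` are its values at `β±`. -/
noncomputable def degenerateQuasipotential (γ c β x v : 𝕜) : 𝕜 :=
  (c * x / γ + β * v) ^ 2 / (2 * β)

variable [NeZero (2 : 𝕜)]

theorem hasDerivAt_sq_div_two_mul {f : 𝕜 → 𝕜} {f' y : 𝕜} (b : 𝕜) (hf : HasDerivAt f f' y) :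
    HasDerivAt (fun z => f z ^ 2 / (2 * b)) (f y * f' / b) y := by
  refine ((hf.fun_pow 2).div_const (2 * b)).congr_deriv ?_
  rw [Nat.cast_ofNat, pow_one, mul_assoc, mul_div_mul_left _ _ two_ne_zero]

theorem hasDerivAt_degenerateQuasipotential_position (γ c β x v : 𝕜) :
    HasDerivAt (fun x' => degenerateQuasipotential γ c β x' v)
      ((c * x / γ + β * v) * (c / γ) / β) x :=
  hasDerivAt_sq_div_two_mul β (((hasDerivAt_const_mul c).div_const γ).add_const (β * v))

theorem hasDerivAt_degenerateQuasipotential_velocity (γ c x v : 𝕜) {β : 𝕜} (hβ : β ≠ 0) :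
    HasDerivAt (fun v' => degenerateQuasipotential γ c β x v') (c * x / γ + β * v) v :=
  (hasDerivAt_sq_div_two_mul β ((hasDerivAt_const_mul β).const_add (c * x / γ))).congr_deriv
    (mul_div_cancel_right₀ _ hβ)

theorem freidlinOperator_degenerateQuasipotential {γ β : 𝕜} (hγ : γ ≠ 0) (hβ : β ≠ 0)
    (c x v : 𝕜) :
    freidlinOperator γ (fun x => c * x) (degenerateQuasipotential γ c β) x v =
      γ / β * v * (c * x / γ + β * v) * (β ^ 2 - β + c / γ ^ 2) := by
  rw [freidlinOperator, (hasDerivAt_degenerateQuasipotential_position γ c β x v).deriv,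
    (hasDerivAt_degenerateQuasipotential_velocity γ c x v hβ).deriv]
  field_simp
  ring

theorem stmt15_general {γ β : 𝕜} (hγ : γ ≠ 0) (hβ : β ≠ 0) (c : 𝕜) :
    (∀ x v, freidlinOperator γ (fun x => c * x) (degenerateQuasipotential γ c β) x v = 0) ↔
      β ^ 2 - β + c / γ ^ 2 = 0 := by
  simp only [freidlinOperator_degenerateQuasipotential hγ hβ]
  refine ⟨fun h => ?_, fun hroot x v => by rw [hroot, mul_zero]⟩
  have hrest : γ * (β ^ 2 - β + c / γ ^ 2) = 0 := by
    simpa [hβ] using h 0 1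
  exact (mul_eq_zero.mp hrest).resolve_left hγ

end

/-- The degenerate quasipotential `φ(x, v) = (c·x/γ + β·v)²/(2β)` of equation (6.2)
solves the Freidlin equation (6.1) of the Kramers model with `U(x) = c·x²/2`,
provided `β² − β + c/γ² = 0`. -/
theorem stmt15 (γ c β : ℝ) (hγ : γ ≠ 0) (hβ : β ≠ 0)
    (hroot : β ^ 2 - β + c / γ ^ 2 = 0) :
    ∀ x v : ℝ,
      v * deriv (fun x' : ℝ => (c * x' / γ + β * v) ^ 2 / (2 * β)) x -
          (γ * v + c * x) * deriv (fun v' : ℝ => (c * x / γ + β * v') ^ 2 / (2 * β)) v +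
          γ * (deriv (fun v' : ℝ => (c * x / γ + β * v') ^ 2 / (2 * β)) v) ^ 2 = 0 :=
  (stmt15_general hγ hβ c).mpr hroot
end

section
/- Let γ, c, β be real numbers with γ ≠ 0, β ≠ 0, and β² − β + c/γ² = 0. Let M be the 2×2 real matrix with rows (0, 1) and (−c, −γ), let D be the 2×2 real matrix with rows (0, 0) and (0, γ), and let S := (1/β) · w·wᵀ where w is the column vector (c/γ, β). Then S·M + Mᵀ·S + 2·S·D·S = 0, and S has rank 1. -/
/-!
The row vector `wᵀ` is a left eigenvector of the drift matrix: the root condition on `β` says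
precisely that `wᵀ M = -γ β wᵀ`. Hence for `S = s w wᵀ` every term of the Riccati equation is a
multiple of `w wᵀ`, and the equation reduces to the scalar identity `-γ β + s (wᵀ D w) = 0`. Since
`wᵀ D w = γ β²`, it holds for `s = β⁻¹`.
-/

open Matrix

section Rank

variable {m n R : Type*} [Fintype n] [CommRing R] [IsDomain R]

theorem matrix_rank_eq_zero_iff {A : Matrix m n R} : A.rank = 0 ↔ A = 0 := by
  classical
  rw [Matrix.rank, Submodule.finrank_eq_zero, LinearMap.range_eq_bot, ← mulVecLin_zero,
    ← toLin'_apply', ← toLin'_apply', EmbeddingLike.apply_eq_iff_eq]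

theorem rank_vecMulVec_eq_one {w : m → R} {v : n → R} (hw : w ≠ 0) (hv : v ≠ 0) :
    (vecMulVec w v).rank = 1 := by
  obtain ⟨i, hi⟩ := Function.ne_iff.mp hw
  obtain ⟨j, hj⟩ := Function.ne_iff.mp hv
  have hne : vecMulVec w v ≠ 0 := fun h ↦ mul_ne_zero hi hj (congrFun₂ h i j)
  exact le_antisymm (rank_vecMulVec_le w v)
    (Nat.one_le_iff_ne_zero.mpr (matrix_rank_eq_zero_iff.not.mpr hne))

end Rank

theorem mul_transpose_eq_vecMulVec_col {m ι R : Type*} [Unique ι] [NonUnitalNonAssocSemiring R]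
    [Fintype ι] (w : Matrix m ι R) : w * wᵀ = vecMulVec (w.col default) (w.col default) := by
  ext i j
  simp only [mul_apply, Fintype.sum_unique, transpose_apply, vecMulVec_apply, col_apply]

section Riccati

variable {n R : Type*} [Fintype n] [CommSemiring R]

/-- The left-hand side `S M + Mᵀ S + 2 S D S` of the algebraic Riccati equation (4.3) with drift
matrix `M` and diffusion matrix `D`; it vanishes exactly at the solutions `S`. -/
def riccatiResidual (M D S : Matrix n n R) : Matrix n n R :=
  S * M + Mᵀ * S + (2 : R) • (S * D * S)

theorem riccatiResidual_smul_vecMulVec_self {M : Matrix n n R} {w : n → R} {μ : R}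
    (hw : w ᵥ* M = μ • w) (D : Matrix n n R) (s : R) :
    riccatiResidual M D (s • vecMulVec w w) =
      (2 * s * (μ + s * (w ᵥ* D ⬝ᵥ w))) • vecMulVec w w := by
  have hright : vecMulVec w w * M = μ • vecMulVec w w := by
    rw [vecMulVec_mul, hw, vecMulVec_smul]
  have hleft : Mᵀ * vecMulVec w w = μ • vecMulVec w w := by
    rw [mul_vecMulVec, mulVec_transpose, hw, smul_vecMulVec]
  have hquad : vecMulVec w w * D * vecMulVec w w = (w ᵥ* D ⬝ᵥ w) • vecMulVec w w := by
    rw [vecMulVec_mul, vecMulVec_mul_vecMulVec, vecMulVec_smul]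
  simp only [riccatiResidual, Matrix.smul_mul, Matrix.mul_smul, hright, hleft, hquad, smul_smul,
    ← add_smul]
  congr 1
  ring

end Riccati

/-- The drift matrix of the Kramers model with potential `U(x) = c x² / 2` and friction `γ`, in the
coordinates `(x, v)`, linearized at the equilibrium. -/
def kramersDrift {R : Type*} [Ring R] (c γ : R) : Matrix (Fin 2) (Fin 2) R :=
  !![0, 1; -c, -γ]

/-- The diffusion matrix of the Kramers model with friction `γ`: noise acts on the velocity only. -/
def kramersDiffusion {R : Type*} [Zero R] (γ : R) : Matrix (Fin 2) (Fin 2) R :=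
  !![0, 0; 0, γ]

theorem vecMul_kramersDiffusion_dotProduct {R : Type*} [CommSemiring R] (γ a b : R) :
    ![a, b] ᵥ* kramersDiffusion γ ⬝ᵥ ![a, b] = γ * b ^ 2 := by
  have hvecMul : ![a, b] ᵥ* kramersDiffusion γ = ![0, b * γ] := by
    simp [kramersDiffusion]
  rw [hvecMul, vec2_dotProduct']
  ring

theorem vecMul_kramersDrift_of_root {K : Type*} [Field K] {γ c β : K} (hγ : γ ≠ 0)
    (hroot : β ^ 2 - β + c / γ ^ 2 = 0) :
    ![c / γ, β] ᵥ* kramersDrift c γ = (-(γ * β)) • ![c / γ, β] := by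
  have hposition : -(β * c) = -(γ * β * (c / γ)) := by field_simp
  have hvelocity : c / γ - β * γ = -(γ * β * β) := by
    field_simp at hroot ⊢
    linear_combination hroot
  ext i
  fin_cases i
  · simpa [kramersDrift] using hposition
  · simpa [kramersDrift, sub_eq_add_neg] using hvelocity

theorem stmt19_general {K : Type*} [Field K] {γ c β : K} (hγ : γ ≠ 0) (hβ : β ≠ 0)
    (hroot : β ^ 2 - β + c / γ ^ 2 = 0)
    {w : Matrix (Fin 2) (Fin 1) K} (hw : w = !![c / γ; β])
    {S : Matrix (Fin 2) (Fin 2) K} (hS : S = (1 / β) • (w * wᵀ)) :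
    riccatiResidual (kramersDrift c γ) (kramersDiffusion γ) S = 0 ∧ S.rank = 1 := by
  have hcol : w.col default = ![c / γ, β] := by
    ext i
    fin_cases i <;> simp [hw]
  rw [mul_transpose_eq_vecMulVec_col, hcol] at hS
  constructor
  · have hbalance : -(γ * β) + 1 / β * (γ * β ^ 2) = 0 := by
      field_simp
      ring
    rw [hS, riccatiResidual_smul_vecMulVec_self (vecMul_kramersDrift_of_root hγ hroot),
      vecMul_kramersDiffusion_dotProduct, hbalance, mul_zero, zero_smul]
  · have hw_ne : ![c / γ, β] ≠ 0 := fun h ↦ hβ (congrFun h 1)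
    rw [hS, ← smul_vecMulVec]
    exact rank_vecMulVec_eq_one (smul_ne_zero (one_div_ne_zero hβ) hw_ne) hw_ne

/-- The rank-1 Hessian `S = β⁻¹ • w·wᵀ`, `w = (c/γ, β)`, of the degenerate
quasipotential (6.2) solves the algebraic Riccati equation (4.3) of the Kramers
model, and has rank 1. -/
theorem stmt19 (γ c β : ℝ) (hγ : γ ≠ 0) (hβ : β ≠ 0)
    (hroot : β ^ 2 - β + c / γ ^ 2 = 0)
    (w : Matrix (Fin 2) (Fin 1) ℝ) (hw : w = !![c / γ; β])
    (S : Matrix (Fin 2) (Fin 2) ℝ) (hS : S = (1 / β) • (w * wᵀ)) :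
    S * !![(0 : ℝ), 1; -c, -γ] + (!![(0 : ℝ), 1; -c, -γ])ᵀ * S +
        (2 : ℝ) • (S * !![(0 : ℝ), 0; 0, γ] * S) = 0 ∧
      S.rank = 1 :=
  stmt19_general hγ hβ hroot hw hS
end
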